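/- arXiv:2406.18393 — 5 statements merged into one kernel-verified Lean document; each statement's English description precedes it below -/
import Mathlib

section
/- Let Δt > 0 and ε > 0 satisfy Δt ≤ 2ε². Then the function F : ℝ → ℝ, F(c) = c/Δt + (c³ − c)/(2ε²), is strictly monotonically increasing on ℝ; consequently, for every r ∈ ℝ there exists a unique c ∈ ℝ with (c − r)/Δt + (c³ − c)/(2ε²) + (r³ − r)/(2ε²) = 0. -/
/-- Under the stability condition `Δt ≤ 2ε²`, the map `c ↦ c/Δt + (c³ - c)/(2ε²)` is
strictly increasing, so each Crank–Nicolson step has a unique constant solution. -/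
theorem crank_nicolson_constant_unique (Δt ε : ℝ) (hΔt : 0 < Δt) (hε : 0 < ε)
    (hstab : Δt ≤ 2 * ε ^ 2) :
    StrictMono (fun c : ℝ => c / Δt + (c ^ 3 - c) / (2 * ε ^ 2)) ∧
    ∀ r : ℝ, ∃! c : ℝ,
      (c - r) / Δt + (c ^ 3 - c) / (2 * ε ^ 2) + (r ^ 3 - r) / (2 * ε ^ 2) = 0 := by
  have hb : 0 < (2 * ε ^ 2)⁻¹ := by positivity
  have hab : (2 * ε ^ 2)⁻¹ ≤ Δt⁻¹ := inv_anti₀ hΔt hstab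
  simp only [div_eq_mul_inv]
  generalize (2 * ε ^ 2)⁻¹ = b at *
  generalize Δt⁻¹ = a at *
  have hmono : StrictMono (fun c : ℝ => c * a + (c ^ 3 - c) * b) := by
    intro x y hxy
    have h3 : x ^ 3 < y ^ 3 := (Odd.strictMono_pow (by decide : Odd 3)) hxy
    have h1 : 0 < (y ^ 3 - x ^ 3) * b := mul_pos (by linarith) hb
    have h2 : 0 ≤ (y - x) * (a - b) := mul_nonneg (by linarith) (by linarith)
    show x * a + (x ^ 3 - x) * b < y * a + (y ^ 3 - y) * b
    linarith
  refine ⟨hmono, fun r => ?_⟩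
  obtain ⟨y, hy⟩ : ∃ y, y = r * a - (r ^ 3 - r) * b := ⟨_, rfl⟩
  obtain ⟨M, hM⟩ : ∃ M, M = 1 + |y| / b := ⟨_, rfl⟩
  have hM1 : 1 ≤ M := by
    have : 0 ≤ |y| / b := by positivity
    linarith
  have hMb : |y| ≤ M * b := by
    have : M * b = b + |y| := by rw [hM]; field_simp
    linarith
  have hM3 : M ≤ M ^ 3 := le_self_pow₀ hM1 (by norm_num)
  have h1 : M * b ≤ M ^ 3 * b := mul_le_mul_of_nonneg_right hM3 hb.le
  have h2 : 0 ≤ M * (a - b) := mul_nonneg (by linarith) (by linarith)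
  have hc : Continuous (fun c : ℝ => c * a + (c ^ 3 - c) * b) := by fun_prop
  have hy' := abs_le.mp (le_refl |y|)
  obtain ⟨c, -, hc'⟩ := intermediate_value_Icc (by linarith : -M ≤ M) hc.continuousOn
    (show y ∈ _ from ⟨by
      show -M * a + ((-M) ^ 3 - -M) * b ≤ y
      have : (-M) ^ 3 = -(M ^ 3) := by ring
      rw [this]; linarith, by
      show y ≤ M * a + (M ^ 3 - M) * b
      linarith⟩)
  have hc' : c * a + (c ^ 3 - c) * b = y := hc'
  refine ⟨c, ?_, fun d hd => hmono.injective ?_⟩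
  · show (c - r) * a + (c ^ 3 - c) * b + (r ^ 3 - r) * b = 0
    linarith
  · have hd : (d - r) * a + (d ^ 3 - d) * b + (r ^ 3 - r) * b = 0 := hd
    show d * a + (d ^ 3 - d) * b = c * a + (c ^ 3 - c) * b
    linarith
end

section
/- Let Δt > 0 and ε > 0 with Δt ≤ 2ε², set r₁ = √(1 + 2ε²/Δt), and suppose c, r ∈ ℝ satisfy (c − r)/Δt + (c³ − c)/(2ε²) + (r³ − r)/(2ε²) = 0. Then: (i) c = 0 if and only if r ∈ {0, r₁, −r₁}; (ii) c > 0 if and only if r ∈ (0, r₁) ∪ (−∞, −r₁); (iii) c < 0 if and only if r ∈ (−r₁, 0) ∪ (r₁, ∞). -/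
/-- Sign trichotomy for the Crank–Nicolson constant-state equation relating
`r = φⁿ` and `c = φ^{n+1}` under the stability condition `Δt ≤ 2ε²`. -/
theorem crank_nicolson_sign_trichotomy (Δt ε : ℝ) (hΔt : 0 < Δt) (hε : 0 < ε)
    (hstab : Δt ≤ 2 * ε ^ 2) (r₁ : ℝ) (hr₁ : r₁ = Real.sqrt (1 + 2 * ε ^ 2 / Δt))
    (c r : ℝ)
    (heq : (c - r) / Δt + (c ^ 3 - c) / (2 * ε ^ 2) + (r ^ 3 - r) / (2 * ε ^ 2) = 0) :
    (c = 0 ↔ (r = 0 ∨ r = r₁ ∨ r = -r₁)) ∧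
    (c > 0 ↔ (r ∈ Set.Ioo (0 : ℝ) r₁ ∨ r ∈ Set.Iio (-r₁))) ∧
    (c < 0 ↔ (r ∈ Set.Ioo (-r₁) (0 : ℝ) ∨ r ∈ Set.Ioi r₁)) := by
  obtain ⟨k, hk⟩ : ∃ k, k = 2 * ε ^ 2 / Δt := ⟨_, rfl⟩
  have hk1 : 1 ≤ k := by rw [hk, le_div_iff₀ hΔt]; linarith
  have hsq : r₁ ^ 2 = 1 + k := by
    rw [hr₁, ← hk, Real.sq_sqrt (by linarith)]
  have hpos : 0 < r₁ := by
    rw [hr₁, ← hk]; exact Real.sqrt_pos.mpr (by linarith)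
  have h1 : k * (c - r) + (c ^ 3 - c) + (r ^ 3 - r) = 0 := by
    have h2 : k * (c - r) + (c ^ 3 - c) + (r ^ 3 - r) = 2 * ε ^ 2 *
        ((c - r) / Δt + (c ^ 3 - c) / (2 * ε ^ 2) + (r ^ 3 - r) / (2 * ε ^ 2)) := by
      rw [hk]; field_simp
    rw [h2, heq, mul_zero]
  have key : c * (c ^ 2 + (k - 1)) = r * ((r₁ - r) * (r₁ + r)) := by
    linear_combination h1 - r * hsq
  have cp : 0 < c → 0 < r * ((r₁ - r) * (r₁ + r)) := fun h => by
    rw [← key]; exact mul_pos h (by nlinarith [pow_pos h 2])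
  have cn : c < 0 → r * ((r₁ - r) * (r₁ + r)) < 0 := fun h => by
    rw [← key]; exact mul_neg_of_neg_of_pos h (by nlinarith [pow_pos (neg_pos.mpr h) 2])
  have cz : c = 0 → r * ((r₁ - r) * (r₁ + r)) = 0 := fun h => by
    rw [← key, h, zero_mul]
  have a1 : r < -r₁ → 0 < r * ((r₁ - r) * (r₁ + r)) := fun h =>
    mul_pos_of_neg_of_neg (by linarith) (mul_neg_of_pos_of_neg (by linarith) (by linarith))
  have a2 : r = -r₁ → r * ((r₁ - r) * (r₁ + r)) = 0 := fun h => by rw [h]; ring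
  have a3 : -r₁ < r → r < 0 → r * ((r₁ - r) * (r₁ + r)) < 0 := fun h h' =>
    mul_neg_of_neg_of_pos h' (mul_pos (by linarith) (by linarith))
  have a4 : r = 0 → r * ((r₁ - r) * (r₁ + r)) = 0 := fun h => by rw [h]; ring
  have a5 : 0 < r → r < r₁ → 0 < r * ((r₁ - r) * (r₁ + r)) := fun h h' =>
    mul_pos h (mul_pos (by linarith) (by linarith))
  have a6 : r = r₁ → r * ((r₁ - r) * (r₁ + r)) = 0 := fun h => by rw [h]; ring
  have a7 : r₁ < r → r * ((r₁ - r) * (r₁ + r)) < 0 := fun h =>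
    mul_neg_of_pos_of_neg (by linarith) (mul_neg_of_neg_of_pos (by linarith) (by linarith))
  simp only [Set.mem_Ioo, Set.mem_Iio, Set.mem_Ioi]
  generalize r * ((r₁ - r) * (r₁ + r)) = P at *
  clear key h1 hsq hr₁ heq hk hk1 hstab
  grind
end

section
/- Let Δt > 0 and ε > 0 with Δt ≤ 2ε², and set r₁ = √(1 + 2ε²/Δt). Then there exists a unique r ∈ ℝ such that (r₁ − r)/Δt + (r₁³ − r₁)/(2ε²) + (r³ − r)/(2ε²) = 0; moreover this unique r satisfies r < −r₁. -/
/-- For `c = r₁` the Crank–Nicolson constant-state equation has a unique real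
solution `r`, and it satisfies `r < -r₁`. -/
theorem crank_nicolson_unique_preimage_of_r1 (Δt ε : ℝ) (hΔt : 0 < Δt) (hε : 0 < ε)
    (hstab : Δt ≤ 2 * ε ^ 2) (r₁ : ℝ) (hr₁ : r₁ = Real.sqrt (1 + 2 * ε ^ 2 / Δt)) :
    (∃! r : ℝ,
      (r₁ - r) / Δt + (r₁ ^ 3 - r₁) / (2 * ε ^ 2) + (r ^ 3 - r) / (2 * ε ^ 2) = 0) ∧
    (∀ r : ℝ,
      (r₁ - r) / Δt + (r₁ ^ 3 - r₁) / (2 * ε ^ 2) + (r ^ 3 - r) / (2 * ε ^ 2) = 0 →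
      r < -r₁) := by
  have hK : 1 ≤ 2 * ε ^ 2 / Δt := by rw [le_div_iff₀ hΔt]; linarith
  have hs : 0 < r₁ := by rw [hr₁]; exact Real.sqrt_pos.mpr (by linarith)
  have hs2 : r₁ ^ 2 = 1 + 2 * ε ^ 2 / Δt := by rw [hr₁]; exact Real.sq_sqrt (by linarith)
  have h2 : 2 ≤ r₁ ^ 2 := by linarith
  have hE : 0 < 2 * ε ^ 2 := by positivity
  have key : ∀ r : ℝ, (r₁ - r) / Δt + (r₁ ^ 3 - r₁) / (2 * ε ^ 2) + (r ^ 3 - r) / (2 * ε ^ 2) = 0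
      ↔ r ^ 3 - r₁ ^ 2 * r + (2 * r₁ ^ 3 - 2 * r₁) = 0 := by
    intro r
    have e : (r₁ - r) / Δt + (r₁ ^ 3 - r₁) / (2 * ε ^ 2) + (r ^ 3 - r) / (2 * ε ^ 2)
        = (r ^ 3 - r₁ ^ 2 * r + (2 * r₁ ^ 3 - 2 * r₁)) / (2 * ε ^ 2) := by
      have e1 : (r₁ - r) / Δt = (r₁ ^ 2 - 1) * (r₁ - r) / (2 * ε ^ 2) := by
        rw [hs2]; field_simp; ring
      rw [e1]; ring
    rw [e, div_eq_zero_iff]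
    simp [hε.ne']
  simp only [key]
  have h3 : r₁ ^ 3 ≤ 2 * r₁ ^ 3 - 2 * r₁ := by nlinarith
  have h3p : 0 < r₁ ^ 3 := by positivity
  have lt : ∀ r : ℝ, r ^ 3 - r₁ ^ 2 * r + (2 * r₁ ^ 3 - 2 * r₁) = 0 → r < -r₁ := by
    intro r hr
    by_contra! hc
    have hneg : r ^ 3 - r₁ ^ 2 * r + r₁ ^ 3 ≤ 0 := by linarith
    have a : 0 ≤ r + r₁ := by linarith
    rcases le_total r 0 with h | h
    · have := mul_nonneg (mul_nonneg (neg_nonneg.mpr h) a) (by linarith : 0 ≤ r₁ - r)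
      nlinarith
    · rcases le_total r r₁ with h' | h'
      · have b := mul_nonneg (sq_nonneg r₁) (sub_nonneg.mpr h')
        have c : 0 ≤ r ^ 3 := by positivity
        have d : r ^ 3 = 0 := by nlinarith
        have : r = 0 := by simpa using d
        subst this
        nlinarith
      · have := mul_nonneg (mul_nonneg h a) (sub_nonneg.mpr h')
        nlinarith
  refine ⟨?_, lt⟩
  obtain ⟨r, -, hr⟩ := intermediate_value_Icc (a := -2 * r₁) (b := -r₁) (by linarith)
    (f := fun r => r ^ 3 - r₁ ^ 2 * r + (2 * r₁ ^ 3 - 2 * r₁)) (by fun_prop)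
    (show (0 : ℝ) ∈ _ from ⟨by nlinarith, by nlinarith⟩)
  refine ⟨r, hr, fun y hy => ?_⟩
  have ly := lt y hy
  have lr := lt r hr
  simp only at hr hy
  have : (y - r) * (y ^ 2 + y * r + r ^ 2 - r₁ ^ 2) = 0 := by linear_combination hy - hr
  rcases mul_eq_zero.mp this with h | h
  · linarith
  · nlinarith [mul_pos (by linarith : 0 < -r₁ - y) (by linarith : 0 < -r₁ - r), sq_nonneg (y - r)]
end

section
/- Let Δt > 0, ε > 0 and r ∈ ℝ. Then the function G : ℝ → ℝ, G(c) = (c − r)/Δt + (r + c)(r² + c²)/(4ε²) − r/ε², is strictly monotonically increasing on ℝ; consequently, for every r ∈ ℝ there exists a unique c ∈ ℝ with (c − r)/Δt + (r + c)(r² + c²)/(4ε²) − r/ε² = 0. No restriction on Δt is required. -/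
lemma cs_mono (ε : ℝ) (hε : 0 < ε) (r : ℝ) :
    Monotone (fun c : ℝ => (r + c) * (r ^ 2 + c ^ 2) / (4 * ε ^ 2) - r / ε ^ 2) := by
  intro a b hab
  have h : (r + a) * (r ^ 2 + a ^ 2) ≤ (r + b) * (r ^ 2 + b ^ 2) := by
    have h1 : 0 ≤ (b - a) * ((a + b) ^ 2 + (a + r) ^ 2 + (b + r) ^ 2) :=
      mul_nonneg (sub_nonneg.2 hab) (by positivity)
    nlinarith [h1]
  have h2 := div_le_div_of_nonneg_right h (by positivity : (0:ℝ) ≤ 4 * ε ^ 2)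
  show _ - _ ≤ _ - _
  linarith

lemma cs_strict (Δt ε : ℝ) (hΔt : 0 < Δt) (hε : 0 < ε) (r : ℝ) :
    StrictMono (fun c : ℝ =>
      (c - r) / Δt + (r + c) * (r ^ 2 + c ^ 2) / (4 * ε ^ 2) - r / ε ^ 2) := by
  intro a b hab
  have h1 := cs_mono ε hε r hab.le
  have h2 : (a - r) / Δt < (b - r) / Δt := div_lt_div_of_pos_right (by linarith) hΔt
  simp only at h1 ⊢
  linarith

lemma cs_exists (Δt ε : ℝ) (hΔt : 0 < Δt) (hε : 0 < ε) (r : ℝ) : ∃ c : ℝ,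
      (c - r) / Δt + (r + c) * (r ^ 2 + c ^ 2) / (4 * ε ^ 2) - r / ε ^ 2 = 0 := by
  have hm := cs_mono ε hε r
  have hc : Continuous (fun c : ℝ =>
      (c - r) / Δt + (r + c) * (r ^ 2 + c ^ 2) / (4 * ε ^ 2) - r / ε ^ 2) := by fun_prop
  obtain ⟨h, hh⟩ : ∃ h, h = (r + r) * (r ^ 2 + r ^ 2) / (4 * ε ^ 2) - r / ε ^ 2 := ⟨_, rfl⟩
  have hr : (r - r) / Δt = 0 := by simp
  have ht : (r - Δt * h - r) / Δt = -h := by field_simp; ring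
  rcases le_total h 0 with h0 | h0
  · have hle : r ≤ r - Δt * h := by nlinarith
    have hm' := hm hle
    simp only at hm'
    exact mem_range_of_exists_le_of_exists_ge hc ⟨r, by linarith⟩
      ⟨r - Δt * h, by linarith⟩
  · have hle : r - Δt * h ≤ r := by nlinarith
    have hm' := hm hle
    simp only at hm'
    exact mem_range_of_exists_le_of_exists_ge hc ⟨r - Δt * h, by linarith⟩
      ⟨r, by linarith⟩


/-- Unconditional stability of the convex splitting of the modified Crank–Nicolson
scheme at constant states: for every `Δt > 0` the map
`c ↦ (c - r)/Δt + (r + c)(r² + c²)/(4ε²) - r/ε²` is strictly increasing and has a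
unique zero. -/
theorem convex_splitting_constant_unique (Δt ε : ℝ) (hΔt : 0 < Δt) (hε : 0 < ε)
    (r : ℝ) :
    StrictMono (fun c : ℝ =>
      (c - r) / Δt + (r + c) * (r ^ 2 + c ^ 2) / (4 * ε ^ 2) - r / ε ^ 2) ∧
    ∀ r : ℝ, ∃! c : ℝ,
      (c - r) / Δt + (r + c) * (r ^ 2 + c ^ 2) / (4 * ε ^ 2) - r / ε ^ 2 = 0 := by
  refine ⟨cs_strict Δt ε hΔt hε r, fun r => ?_⟩
  obtain ⟨c, hc⟩ := cs_exists Δt ε hΔt hε r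
  exact ⟨c, hc, fun y hy => (cs_strict Δt ε hΔt hε r).injective (hy.trans hc.symm)⟩
end

section
/- Let Δt > 0 and ε > 0 with Δt < 4ε², and set q = √(1 + 4ε²/Δt). Then there exists a unique φ ∈ ℝ such that φ − (Δt/(4ε²))·(φ³ − φ) = 2q; moreover this unique φ satisfies φ < −q. -/
/-- For `Δt < 4ε²` and `q = √(1 + 4ε²/Δt)`, the equation
`φ - (Δt/(4ε²))(φ³ - φ) = 2q` has a unique real solution, and it satisfies
`φ < -q`. -/
theorem dirk_unique_stage_solution (Δt ε : ℝ) (hΔt : 0 < Δt) (hε : 0 < ε)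
    (hstab : Δt < 4 * ε ^ 2) (q : ℝ) (hq : q = Real.sqrt (1 + 4 * ε ^ 2 / Δt)) :
    (∃! φ : ℝ, φ - Δt / (4 * ε ^ 2) * (φ ^ 3 - φ) = 2 * q) ∧
    (∀ φ : ℝ, φ - Δt / (4 * ε ^ 2) * (φ ^ 3 - φ) = 2 * q → φ < -q) := by
  have he : 0 < 4 * ε ^ 2 := by positivity
  have hq0 : 0 < q := by rw [hq]; positivity
  have hq2 : q ^ 2 = 1 + 4 * ε ^ 2 / Δt := by
    rw [hq]; exact Real.sq_sqrt (by positivity)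
  have haq : Δt / (4 * ε ^ 2) * q ^ 2 = Δt / (4 * ε ^ 2) + 1 := by
    rw [hq2]; field_simp
  have ha0 : 0 < Δt / (4 * ε ^ 2) := by positivity
  have ha1 : Δt / (4 * ε ^ 2) < 1 := (div_lt_one he).2 hstab
  generalize Δt / (4 * ε ^ 2) = a at *
  have key : ∀ φ : ℝ, φ - a * (φ ^ 3 - φ) = a * (φ * (q ^ 2 - φ ^ 2)) := by
    intro φ
    linear_combination (-φ) * haq
  have hlt : ∀ φ : ℝ, φ - a * (φ ^ 3 - φ) = 2 * q → φ < -q := by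
    intro φ h
    rw [key] at h
    by_contra! hc
    rcases le_or_gt φ 0 with h0 | h0
    · have h1 : 0 ≤ q ^ 2 - φ ^ 2 := by nlinarith
      have h2 : φ * (q ^ 2 - φ ^ 2) ≤ 0 := mul_nonpos_of_nonpos_of_nonneg h0 h1
      nlinarith
    · rcases le_or_gt q φ with h3 | h3
      · have h1 : q ^ 2 - φ ^ 2 ≤ 0 := by nlinarith
        have h2 : φ * (q ^ 2 - φ ^ 2) ≤ 0 := mul_nonpos_of_nonneg_of_nonpos h0.le h1
        nlinarith
      · have h4 : 0 < a * φ ^ 3 := by positivity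
        have h5 : (a + 1) * φ - a * φ ^ 3 = 2 * q := by
          linear_combination h - φ * haq
        nlinarith
  refine ⟨?_, hlt⟩
  have hex : ∃ φ : ℝ, φ - a * (φ ^ 3 - φ) = 2 * q := by
    have hc : ContinuousOn (fun φ : ℝ => φ - a * (φ ^ 3 - φ)) (Set.Icc (-(2 * q)) (-q)) := by
      fun_prop
    have := intermediate_value_Icc' (by linarith) hc
    obtain ⟨x, -, hx⟩ := this (show 2 * q ∈ Set.Icc _ _ from by
      constructor
      · simp only [key]
        nlinarith
      · simp only [key]
        have : a * (-(2 * q) * (q ^ 2 - (-(2 * q)) ^ 2)) = 6 * q * (a + 1) := by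
          linear_combination 6 * q * haq
        rw [this]
        nlinarith)
    exact ⟨x, hx⟩
  obtain ⟨x, hx⟩ := hex
  refine ⟨x, hx, ?_⟩
  intro y hy
  have hy : y - a * (y ^ 3 - y) = 2 * q := hy
  have hxq := hlt x hx
  have hyq := hlt y hy
  have hprod : (y - x) * (1 + a - a * (y ^ 2 + y * x + x ^ 2)) = 0 := by
    linear_combination hy - hx
  rcases mul_eq_zero.1 hprod with h | h
  · linarith
  · exfalso
    have h1 : q ^ 2 < y ^ 2 := by nlinarith
    have h2 : 0 < y * x := mul_pos_of_neg_of_neg (by linarith) (by linarith)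
    have h3 : q ^ 2 < y ^ 2 + y * x + x ^ 2 := by nlinarith [sq_nonneg x]
    have h4 := mul_lt_mul_of_pos_left h3 ha0
    linarith
end
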